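/- arXiv:1106.5480 — 2 statements merged into one kernel-verified Lean document; each statement's English description precedes it below -/
import Mathlib

section
/- Let g_n denote the number of strict partial order relations on {1, …, n} that are strongly graded and avoid 3+1, let w_n denote the number of strict partial order relations on {1, …, n} that are weakly graded and avoid 3+1, and let ψ_n = Σ_{i=0}^{n} 2^{i(n−i)}/(i!·(n−i)!). Then g_n ∼ n!·ψ_n and w_n ∼ n!·ψ_n as n → ∞; that is, lim_{n→∞} g_n/(n!·ψ_n) = 1 and lim_{n→∞} w_n/(n!·ψ_n) = 1. -/
/-- `r` is a strict partial order relation (irreflexive and transitive). -/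
def IsStrictOrderRel {n : ℕ} (r : Fin n → Fin n → Prop) : Prop :=
  (∀ a, ¬ r a a) ∧ ∀ a b c, r a b → r b c → r a c

/-- the poset `(Fin n, r)` avoids `3+1`: there is no chain `x < y < z` together with
an element `w` incomparable to each of `x`, `y`, `z`. -/
def RelAvoids31 {n : ℕ} (r : Fin n → Fin n → Prop) : Prop :=
  ¬ ∃ w x y z : Fin n, r x y ∧ r y z ∧
      (¬ r w x ∧ ¬ r x w) ∧ (¬ r w y ∧ ¬ r y w) ∧ (¬ r w z ∧ ¬ r z w)

/-- a finset that is a chain of the poset `(Fin n, r)`. -/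
def RelChain {n : ℕ} (r : Fin n → Fin n → Prop) (s : Finset (Fin n)) : Prop :=
  ∀ a ∈ s, ∀ b ∈ s, a ≠ b → r a b ∨ r b a

/-- a maximal chain of the poset `(Fin n, r)`. -/
def RelMaxChain {n : ℕ} (r : Fin n → Fin n → Prop) (s : Finset (Fin n)) : Prop :=
  RelChain r s ∧ ∀ t : Finset (Fin n), RelChain r t → s ⊆ t → s = t

/-- strongly graded: all maximal chains have the same number of elements. -/
def RelStronglyGraded {n : ℕ} (r : Fin n → Fin n → Prop) : Prop :=
  ∀ s t : Finset (Fin n), RelMaxChain r s → RelMaxChain r t → s.card = t.card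

/-- weakly graded: there is a rank function increasing by one along covers such that
every connected component of the comparability graph contains an element of rank `0`. -/
def RelWeaklyGraded {n : ℕ} (r : Fin n → Fin n → Prop) : Prop :=
  ∃ rk : Fin n → ℕ,
    (∀ a b, r a b → (¬ ∃ c, r a c ∧ r c b) → rk b = rk a + 1) ∧
    ∀ v, ∃ u, Relation.ReflTransGen (fun a b => r a b ∨ r b a) v u ∧ rk u = 0

/-- the number of strongly graded `3+1`-avoiding strict partial orders on `{1, …, n}`. -/
noncomputable def gCount (n : ℕ) : ℕ :=
  Nat.card {r : Fin n → Fin n → Prop //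
    IsStrictOrderRel r ∧ RelStronglyGraded r ∧ RelAvoids31 r}

/-- the number of weakly graded `3+1`-avoiding strict partial orders on `{1, …, n}`. -/
noncomputable def wCount (n : ℕ) : ℕ :=
  Nat.card {r : Fin n → Fin n → Prop //
    IsStrictOrderRel r ∧ RelWeaklyGraded r ∧ RelAvoids31 r}
/-- `ψ_n = Σ_{i=0}^{n} 2^{i(n−i)}/(i!·(n−i)!)`. -/
noncomputable def psi (n : ℕ) : ℝ :=
  ∑ i ∈ Finset.range (n + 1),
    (2 : ℝ) ^ (i * (n - i)) / (i.factorial * (n - i).factorial)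

/-!
The number `n! * psi n` counts the pairs `(S, E)` of a vertex set `S` and a set `E` of edges from
`S` to `Sᶜ`. If no vertex is isolated, then `E` determines `S` and is a strongly graded strict
order without chains of three elements, so it avoids `3+1`; conversely every strict order without
chains of three elements is the edge set of such a pair. Hence it suffices that graphs with an
isolated vertex, and weakly graded orders avoiding `3+1` that do have a chain of three elements,
are negligible in number.

In an order of the latter kind any two elements whose ranks differ by at least two are comparable.
Let `S` consist of the elements lying above the whole level just below their own. An element
outside `S` lies below the whole next level, so the only relations left to be specified are those
from an element of `S` to an element of `Sᶜ` one level higher. Colour the elements of `S` by their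
rank and those of `Sᶜ` by their rank minus one: these are exactly the monochromatic pairs from `S`
to `Sᶜ`, and the colouring is not constant.

If `k` vertices lie outside the largest colour class, then by AM-GM there are at most
`n ^ 2 / 4 - k * n / 4` monochromatic pairs from `S` to `Sᶜ`. The resulting factor
`2 ^ (-k * n / 4)` outweighs the at most `n ^ (2 * k)` choices of these vertices and their colours.
Graphs with an isolated vertex are covered by the colourings that single out this vertex.
-/

open Filter Finset

section CutGraphs

variable {α L : Type*} [Fintype α] [DecidableEq α] [DecidableEq L]

/-- The edges of the cut `(S, Sᶜ)`, directed from `S` to `Sᶜ`, whose ends have the same colour. -/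
def monoCut (S : Finset α) (f : α → L) : Finset (α × α) :=
  {p ∈ S ×ˢ Sᶜ | f p.1 = f p.2}

/-- The pairs `(S, E)` of a vertex set `S` and a set `E` of monochromatic edges from `S` to `Sᶜ`.
For a constant colouring these are the bipartite graphs with a distinguished side. -/
def cutGraphs (f : α → L) : Finset (Σ _ : Finset α, Finset (α × α)) :=
  univ.sigma fun S => (monoCut S f).powerset

lemma mem_cutGraphs {f : α → L} {p : Σ _ : Finset α, Finset (α × α)} :
    p ∈ cutGraphs f ↔ ∀ x y, (x, y) ∈ p.2 → x ∈ p.1 ∧ y ∉ p.1 ∧ f x = f y := by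
  simp [cutGraphs, monoCut, subset_iff, and_assoc]

lemma card_cutGraphs (f : α → L) : #(cutGraphs f) = ∑ S, 2 ^ #(monoCut S f) := by
  simp [cutGraphs]

lemma factorial_mul_psi (n : ℕ) :
    (n.factorial : ℝ) * psi n = ∑ i ∈ range (n + 1), (n.choose i : ℝ) * 2 ^ (i * (n - i)) := by
  rw [psi, mul_sum]
  refine sum_congr rfl fun i hi => ?_
  rw [Nat.cast_choose ℝ (Nat.lt_succ_iff.1 (mem_range.1 hi))]
  ring

lemma card_cutGraphs_const (c : L) :
    (#(cutGraphs fun _ : α => c) : ℝ)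
      = ((Fintype.card α).factorial : ℝ) * psi (Fintype.card α) := by
  have h := sum_powerset_apply_card (fun i => 2 ^ (i * (Fintype.card α - i)))
    (x := (univ : Finset α))
  simp only [powerset_univ, card_univ, smul_eq_mul] at h
  simp only [card_cutGraphs, monoCut, filter_true, card_product, card_compl, h, factorial_mul_psi]
  push_cast
  rfl

lemma factorial_mul_psi_pos (n : ℕ) : 0 < (n.factorial : ℝ) * psi n := by
  rw [psi]
  exact mul_pos (by positivity) (sum_pos (fun i _ => by positivity) nonempty_range_add_one)

lemma sq_le_four_mul_half_mul_add_one (n : ℕ) : n ^ 2 ≤ 4 * (n / 2 * (n - n / 2) + 1) := by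
  obtain ⟨k, rfl | rfl⟩ := n.even_or_odd'
  · rw [show 2 * k / 2 = k by omega, show 2 * k - k = k by omega]
    nlinarith
  · rw [show (2 * k + 1) / 2 = k by omega, show 2 * k + 1 - k = k + 1 by omega]
    nlinarith

lemma two_pow_mul_rpow_le_factorial_mul_psi (n : ℕ) :
    (2 : ℝ) ^ n * 2 ^ ((n : ℝ) ^ 2 / 4) ≤ 2 * (n + 1) * (n.factorial * psi n) := by
  have choose_middle : (2 : ℝ) ^ n ≤ (n + 1) * n.choose (n / 2) := by
    have h : 2 ^ n ≤ (n + 1) * n.choose (n / 2) := by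
      rw [← Nat.sum_range_choose n]
      simpa using sum_le_card_nsmul (range (n + 1)) n.choose _ fun i _ => Nat.choose_le_middle i n
    exact_mod_cast h
  have exponent : (2 : ℝ) ^ ((n : ℝ) ^ 2 / 4) ≤ 2 * 2 ^ (n / 2 * (n - n / 2)) := by
    rw [← pow_succ', ← Real.rpow_natCast 2]
    refine Real.rpow_le_rpow_of_exponent_le one_le_two ?_
    have h : (n : ℝ) ^ 2 ≤ 4 * ((n / 2 * (n - n / 2) + 1 : ℕ) : ℝ) :=
      mod_cast sq_le_four_mul_half_mul_add_one n
    linarith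
  have middle_term : (n.choose (n / 2) : ℝ) * 2 ^ (n / 2 * (n - n / 2)) ≤ n.factorial * psi n := by
    rw [factorial_mul_psi]
    exact single_le_sum (f := fun i => (n.choose i : ℝ) * 2 ^ (i * (n - i)))
      (fun i _ => by positivity) (mem_range.2 (by omega))
  calc (2 : ℝ) ^ n * 2 ^ ((n : ℝ) ^ 2 / 4)
      ≤ (n + 1) * n.choose (n / 2) * (2 * 2 ^ (n / 2 * (n - n / 2))) := by gcongr
    _ = 2 * (n + 1) * (n.choose (n / 2) * 2 ^ (n / 2 * (n - n / 2))) := by ring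
    _ ≤ 2 * (n + 1) * (n.factorial * psi n) := by gcongr

lemma card_monoCut (S : Finset α) (f : α → L) :
    #(monoCut S f) = ∑ c ∈ univ.image f, #{x ∈ S | f x = c} * #{x ∈ Sᶜ | f x = c} := by
  rw [card_eq_sum_card_fiberwise (f := fun p => f p.1) (t := univ.image f) fun p _ => by simp]
  refine sum_congr rfl fun c _ => ?_
  rw [← card_product]
  congr 1
  ext p
  simp only [monoCut, mem_filter, mem_product]
  grind

lemma four_mul_card_monoCut_add_le (S : Finset α) (f : α → L) {k : ℕ}
    (hk : ∀ c, k ≤ #{x | f x ≠ c}) :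
    4 * #(monoCut S f) + k * Fintype.card α ≤ Fintype.card α ^ 2 := by
  have colour_class (c : L) :
      4 * (#{x ∈ S | f x = c} * #{x ∈ Sᶜ | f x = c}) + k * #{x | f x = c}
        ≤ Fintype.card α * #{x | f x = c} := by
    have split : #{x | f x = c} = #{x ∈ S | f x = c} + #{x ∈ Sᶜ | f x = c} := by
      rw [← card_union_of_disjoint (disjoint_filter_filter disjoint_compl_right),
        ← filter_union, union_compl]
    have size : #{x | f x = c} + k ≤ Fintype.card α := by
      rw [← card_univ, ← card_filter_add_card_filter_not (s := univ) (fun x => f x = c)]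
      exact Nat.add_le_add_left (hk c) _
    have amgm := four_mul_le_sq_add #{x ∈ S | f x = c} #{x ∈ Sᶜ | f x = c}
    rw [← split] at amgm
    nlinarith
  have classes : Fintype.card α = ∑ c ∈ univ.image f, #{x | f x = c} := by
    rw [← card_univ]
    exact card_eq_sum_card_image f univ
  calc 4 * #(monoCut S f) + k * Fintype.card α
      = ∑ c ∈ univ.image f,
          (4 * (#{x ∈ S | f x = c} * #{x ∈ Sᶜ | f x = c}) + k * #{x | f x = c}) := by
        rw [card_monoCut, sum_add_distrib, ← mul_sum, ← mul_sum, ← classes]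
    _ ≤ ∑ c ∈ univ.image f, Fintype.card α * #{x | f x = c} := sum_le_sum fun c _ => colour_class c
    _ = Fintype.card α ^ 2 := by rw [← mul_sum, ← classes, sq]

/-- The factor `2 ^ (-n / 4)`, which bounds the loss in the number of cut graphs on `n` vertices
for each vertex outside the largest colour class. -/
noncomputable def cutDecay (n : ℕ) : ℝ := 2 ^ (-(n : ℝ) / 4)

lemma cutDecay_pos (n : ℕ) : 0 < cutDecay n := by
  rw [cutDecay]
  positivity

lemma two_pow_card_monoCut_le (S : Finset α) (f : α → L) {k : ℕ} (hk : ∀ c, k ≤ #{x | f x ≠ c}) :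
    (2 : ℝ) ^ #(monoCut S f)
      ≤ 2 ^ ((Fintype.card α : ℝ) ^ 2 / 4) * cutDecay (Fintype.card α) ^ k := by
  have h : (4 * #(monoCut S f) + k * Fintype.card α : ℝ) ≤ (Fintype.card α : ℝ) ^ 2 :=
    mod_cast four_mul_card_monoCut_add_le S f hk
  rw [cutDecay, ← Real.rpow_natCast 2, ← Real.rpow_mul_natCast zero_le_two,
    ← Real.rpow_add zero_lt_two]
  refine Real.rpow_le_rpow_of_exponent_le one_le_two ?_
  linarith

lemma card_cutGraphs_le (f : α → L) {k : ℕ} (hk : ∀ c, k ≤ #{x | f x ≠ c}) :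
    (#(cutGraphs f) : ℝ) ≤ 2 * (Fintype.card α + 1) *
      ((Fintype.card α).factorial * psi (Fintype.card α)) * cutDecay (Fintype.card α) ^ k := by
  have decay_nonneg := (cutDecay_pos (Fintype.card α)).le
  calc (#(cutGraphs f) : ℝ)
      = ∑ S, (2 : ℝ) ^ #(monoCut S f) := by rw [card_cutGraphs]; push_cast; rfl
    _ ≤ #(univ : Finset (Finset α)) •
          (2 ^ ((Fintype.card α : ℝ) ^ 2 / 4) * cutDecay (Fintype.card α) ^ k) :=
        sum_le_card_nsmul _ _ _ fun S _ => two_pow_card_monoCut_le S f hk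
    _ = 2 ^ Fintype.card α * 2 ^ ((Fintype.card α : ℝ) ^ 2 / 4)
          * cutDecay (Fintype.card α) ^ k := by simp [mul_assoc]
    _ ≤ _ := mul_le_mul_of_nonneg_right (two_pow_mul_rpow_le_factorial_mul_psi _) (by positivity)

lemma sum_pow_card_ne {R : Type*} [CommRing R] [Fintype L] (c : L) (t : R) :
    ∑ f : α → L, t ^ #{x | f x ≠ c} = (1 + (Fintype.card L - 1) * t) ^ Fintype.card α := by
  have factor : ∑ l : L, (if l ≠ c then t else 1) = 1 + (Fintype.card L - 1) * t := by
    rw [← add_sum_erase univ _ (mem_univ c), sum_congr rfl fun l hl => if_pos (ne_of_mem_erase hl)]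
    have : 1 ≤ Fintype.card L := Fintype.card_pos_iff.2 ⟨c⟩
    simp [card_erase_of_mem, this]
  rw [← factor, ← card_univ, ← prod_const, prod_univ_sum, Fintype.piFinset_univ]
  exact sum_congr rfl fun f _ => by simp [prod_ite]

/-- The number of cut graphs on `α`, counted once for each non-constant colouring by `L` with
which they are compatible. -/
def nonconstCutCount (α L : Type*) [Fintype α] [DecidableEq α] [Fintype L] [DecidableEq L] : ℕ :=
  ∑ f : α → L with ∃ x y, f x ≠ f y, #(cutGraphs f)

/-- The number of cut graphs on `α` together with a marked isolated vertex: such a graph is one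
whose edges respect the colouring that singles out this vertex. -/
def isolatedCutCount (α : Type*) [Fintype α] [DecidableEq α] : ℕ :=
  ∑ v : α, #(cutGraphs fun x => decide (x = v))

lemma isolatedCutCount_le [Nontrivial α] :
    (isolatedCutCount α : ℝ) ≤ 2 * (Fintype.card α + 1) *
      ((Fintype.card α).factorial * psi (Fintype.card α)) *
      (Fintype.card α * cutDecay (Fintype.card α)) := by
  have vertex (v : α) : (#(cutGraphs fun x => decide (x = v)) : ℝ) ≤ 2 * (Fintype.card α + 1) *
      ((Fintype.card α).factorial * psi (Fintype.card α)) * cutDecay (Fintype.card α) ^ 1 := by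
    refine card_cutGraphs_le _ fun c => card_pos.2 ?_
    obtain ⟨w, hw⟩ := exists_ne v
    cases c
    · exact ⟨v, by simp⟩
    · exact ⟨w, by simpa using hw⟩
  calc (isolatedCutCount α : ℝ) = ∑ v : α, (#(cutGraphs fun x => decide (x = v)) : ℝ) := by
        rw [isolatedCutCount]; push_cast; rfl
    _ ≤ _ := sum_le_card_nsmul _ _ _ fun v _ => vertex v
    _ = _ := by rw [card_univ, nsmul_eq_mul]; ring

lemma sum_nonconst_pow_card_ne_le [Fintype L] (c : L) {t : ℝ} (ht : 0 ≤ t) :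
    ∑ f : α → L with ∃ x y, f x ≠ f y, t ^ #{x | f x ≠ c}
      ≤ (1 + (Fintype.card L - 1) * t) ^ Fintype.card α - 1 := by
  have nonconst_subset :
      ({f | ∃ x y, f x ≠ f y} : Finset (α → L)) ⊆ univ.erase fun _ => c := by
    intro f hf
    obtain ⟨x, y, hxy⟩ := (mem_filter.1 hf).2
    exact mem_erase.2 ⟨by rintro rfl; exact hxy rfl, mem_univ _⟩
  calc ∑ f : α → L with ∃ x y, f x ≠ f y, t ^ #{x | f x ≠ c}
      ≤ ∑ f ∈ univ.erase (fun _ : α => c), t ^ #{x | f x ≠ c} :=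
        sum_le_sum_of_subset_of_nonneg nonconst_subset fun f _ _ => by positivity
    _ = (1 + (Fintype.card L - 1) * t) ^ Fintype.card α - 1 := by
        rw [← sum_pow_card_ne c t, ← sum_erase_add univ _ (mem_univ fun _ : α => c)]
        simp

lemma nonconstCutCount_le [Fintype L] :
    (nonconstCutCount α L : ℝ) ≤ 2 * (Fintype.card α + 1) *
      ((Fintype.card α).factorial * psi (Fintype.card α)) * (Fintype.card L *
        ((1 + (Fintype.card L - 1) * cutDecay (Fintype.card α)) ^ Fintype.card α - 1)) := by
  set t := cutDecay (Fintype.card α)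
  set K := 2 * (Fintype.card α + 1) * ((Fintype.card α).factorial * psi (Fintype.card α))
  have ht : 0 ≤ t := (cutDecay_pos _).le
  have hK : 0 ≤ K := mul_nonneg (by positivity) (factorial_mul_psi_pos _).le
  have majority_colour (f : α → L) (hf : ∃ x y, f x ≠ f y) :
      (#(cutGraphs f) : ℝ) ≤ K * ∑ c, t ^ #{x | f x ≠ c} := by
    obtain ⟨x, -⟩ := hf
    obtain ⟨c, -, hc⟩ := exists_min_image univ (fun c => #{x | f x ≠ c}) ⟨f x, mem_univ _⟩
    refine (card_cutGraphs_le f fun c' => hc c' (mem_univ _)).trans ?_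
    gcongr
    exact single_le_sum (f := fun c => t ^ #{x | f x ≠ c}) (fun _ _ => by positivity) (mem_univ c)
  calc (nonconstCutCount α L : ℝ)
      = ∑ f : α → L with ∃ x y, f x ≠ f y, (#(cutGraphs f) : ℝ) := by
        rw [nonconstCutCount]; push_cast; rfl
    _ ≤ ∑ f : α → L with ∃ x y, f x ≠ f y, K * ∑ c, t ^ #{x | f x ≠ c} :=
        sum_le_sum fun f hf => majority_colour f (mem_filter.1 hf).2
    _ = K * ∑ c, ∑ f : α → L with ∃ x y, f x ≠ f y, t ^ #{x | f x ≠ c} := by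
        rw [← mul_sum, sum_comm]
    _ ≤ K * ∑ _c : L, ((1 + (Fintype.card L - 1) * t) ^ Fintype.card α - 1) := by
        gcongr with c
        exact sum_nonconst_pow_card_ne_le c ht
    _ = _ := by rw [sum_const, card_univ, nsmul_eq_mul]

end CutGraphs

section Asymptotics

lemma tendsto_pow_mul_cutDecay (k : ℕ) :
    Tendsto (fun n : ℕ => (n : ℝ) ^ k * cutDecay n) atTop (nhds 0) := by
  have geometric (n : ℕ) : cutDecay n = ((2 : ℝ) ^ (-(1 : ℝ) / 4)) ^ n := by
    rw [cutDecay, ← Real.rpow_natCast, ← Real.rpow_mul zero_le_two]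
    ring_nf
  simp only [geometric]
  exact tendsto_pow_const_mul_const_pow_of_lt_one k (by positivity)
    (Real.rpow_lt_one_of_one_lt_of_neg one_lt_two (by norm_num))

lemma one_add_pow_sub_one_le {x : ℝ} {n : ℕ} (hx : 0 ≤ x) (hnx : n * x ≤ 1) :
    (1 + x) ^ n - 1 ≤ 2 * (n * x) := by
  have h0 : 0 ≤ n * x := by positivity
  have exp_sub_one := Real.abs_exp_sub_one_le (x := n * x) (by rwa [abs_of_nonneg h0])
  rw [abs_of_nonneg h0] at exp_sub_one
  calc (1 + x) ^ n - 1 ≤ Real.exp x ^ n - 1 := by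
        gcongr
        linarith [Real.add_one_le_exp x]
    _ = Real.exp (n * x) - 1 := by rw [Real.exp_nat_mul]
    _ ≤ 2 * (n * x) := (le_abs_self _).trans exp_sub_one

lemma tendsto_isolatedCutCount_div :
    Tendsto (fun n : ℕ => (isolatedCutCount (Fin n) : ℝ) / (n.factorial * psi n))
      atTop (nhds 0) := by
  have majorant : Tendsto (fun n : ℕ => 2 * ((n : ℝ) ^ 2 * cutDecay n)
      + 2 * ((n : ℝ) ^ 1 * cutDecay n)) atTop (nhds 0) := by
    simpa using ((tendsto_pow_mul_cutDecay 2).const_mul 2).add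
      ((tendsto_pow_mul_cutDecay 1).const_mul 2)
  refine squeeze_zero' (.of_forall fun n => div_nonneg (by positivity)
    (factorial_mul_psi_pos n).le) ?_ majorant
  filter_upwards [eventually_ge_atTop 2] with n hn
  have : Nontrivial (Fin n) := Fin.nontrivial_iff_two_le.2 hn
  have bound := isolatedCutCount_le (α := Fin n)
  rw [Fintype.card_fin] at bound
  rw [div_le_iff₀ (factorial_mul_psi_pos n)]
  linarith

lemma tendsto_nonconstCutCount_div :
    Tendsto (fun n : ℕ => (nonconstCutCount (Fin n) (Fin n) : ℝ) / (n.factorial * psi n))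
      atTop (nhds 0) := by
  have majorant : Tendsto (fun n : ℕ => 4 * ((n : ℝ) ^ 4 * cutDecay n)
      + 4 * ((n : ℝ) ^ 3 * cutDecay n)) atTop (nhds 0) := by
    simpa using ((tendsto_pow_mul_cutDecay 4).const_mul 4).add
      ((tendsto_pow_mul_cutDecay 3).const_mul 4)
  refine squeeze_zero' (.of_forall fun n => div_nonneg (by positivity)
    (factorial_mul_psi_pos n).le) ?_ majorant
  filter_upwards [(tendsto_pow_mul_cutDecay 2).eventually (ge_mem_nhds zero_lt_one),
    eventually_ge_atTop 1] with n small hn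
  have ht := (cutDecay_pos n).le
  have hpsi := (factorial_mul_psi_pos n).le
  have hn' : (0 : ℝ) ≤ n - 1 := sub_nonneg.2 (mod_cast hn)
  have power : (1 + ((n : ℝ) - 1) * cutDecay n) ^ n - 1 ≤ 2 * (n * (n * cutDecay n)) :=
    calc (1 + ((n : ℝ) - 1) * cutDecay n) ^ n - 1 ≤ (1 + n * cutDecay n) ^ n - 1 := by
          gcongr
          linarith
      _ ≤ 2 * (n * (n * cutDecay n)) := one_add_pow_sub_one_le (by positivity) (by linarith)
  have bound := nonconstCutCount_le (α := Fin n) (L := Fin n)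
  rw [Fintype.card_fin] at bound
  rw [div_le_iff₀ (factorial_mul_psi_pos n)]
  calc (nonconstCutCount (Fin n) (Fin n) : ℝ)
      ≤ 2 * (n + 1) * (n.factorial * psi n) * (n * (2 * (n * (n * cutDecay n)))) := by
        refine bound.trans ?_
        gcongr
    _ = _ := by ring

end Asymptotics

section StronglyGraded

variable {α : Type*} [PartialOrder α] {C D : Set α} {a b v : α}

lemma mem_of_isMaxChain_of_forall_ne_imp (hC : IsMaxChain (· < ·) C)
    (h : ∀ b ∈ C, a ≠ b → a < b ∨ b < a) : a ∈ C :=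
  (hC.2 (hC.1.insert h) (Set.subset_insert a C)).symm ▸ Set.mem_insert a C

lemma isMaxChain_inter_Iio_union_inter_Ici (hC : IsMaxChain (· < ·) C) (hD : IsMaxChain (· < ·) D)
    (hvC : v ∈ C) (hvD : v ∈ D) : IsMaxChain (· < ·) (C ∩ Set.Iio v ∪ D ∩ Set.Ici v) := by
  refine ⟨isChain_union.2 ⟨hC.1.mono Set.inter_subset_left, hD.1.mono Set.inter_subset_left,
    fun x hx y hy _ => .inl (hx.2.trans_le hy.2)⟩, fun t ht hsub => hsub.antisymm fun x hx => ?_⟩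
  have hvt : v ∈ t := hsub (.inr ⟨hvD, Set.self_mem_Ici⟩)
  obtain rfl | hxv := eq_or_ne x v
  · exact .inr ⟨hvD, Set.self_mem_Ici⟩
  obtain hlt | hgt := ht hx hvt hxv
  · refine .inl ⟨mem_of_isMaxChain_of_forall_ne_imp hC fun y hy hxy => ?_, hlt⟩
    obtain rfl | hyv := eq_or_ne y v
    · exact .inl hlt
    obtain h | h := hC.1 hy hvC hyv
    · exact ht hx (hsub (.inl ⟨hy, h⟩)) hxy
    · exact .inl (hlt.trans h)
  · refine .inr ⟨mem_of_isMaxChain_of_forall_ne_imp hD fun y hy hxy => ?_, hgt.le⟩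
    obtain rfl | hyv := eq_or_ne y v
    · exact .inr hgt
    obtain h | h := hD.1 hy hvD hyv
    · exact .inr (h.trans hgt)
    · exact ht hx (hsub (.inr ⟨hy, h.le⟩)) hxy

lemma ncard_inter_Iio_eq_of_isMaxChain [Finite α]
    (hs : ∀ s t : Set α, IsMaxChain (· < ·) s → IsMaxChain (· < ·) t → s.ncard = t.ncard)
    (hC : IsMaxChain (· < ·) C) (hD : IsMaxChain (· < ·) D) (hvC : v ∈ C) (hvD : v ∈ D) :
    (C ∩ Set.Iio v).ncard = (D ∩ Set.Iio v).ncard := by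
  have disjoint (s t : Set α) : Disjoint (s ∩ Set.Iio v) (t ∩ Set.Ici v) :=
    Set.disjoint_left.2 fun x hx hx' => hx.2.not_ge hx'.2
  have spliced := hs _ _ (isMaxChain_inter_Iio_union_inter_Ici hC hD hvC hvD)
    (isMaxChain_inter_Iio_union_inter_Ici hD hD hvD hvD)
  rw [Set.ncard_union_eq (disjoint C D), Set.ncard_union_eq (disjoint D D)] at spliced
  exact Nat.add_right_cancel spliced

lemma inter_Iio_eq_insert_of_covBy (hC : IsChain (· < ·) C) (haC : a ∈ C) (hab : a ⋖ b) :
    C ∩ Set.Iio b = insert a (C ∩ Set.Iio a) := by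
  ext x
  refine ⟨fun ⟨hxC, hxb⟩ => ?_, ?_⟩
  · obtain rfl | hxa := eq_or_ne x a
    · exact .inl rfl
    · exact .inr ⟨hxC, (hC hxC haC hxa).resolve_right fun h => hab.2 h hxb⟩
  · rintro (rfl | ⟨hxC, hxa⟩)
    · exact ⟨haC, hab.lt⟩
    · exact ⟨hxC, lt_trans hxa hab.lt⟩

/-- Any two maximal chains through `v` have equally many elements below `v`, for the lower part of
one may be spliced to the upper part of the other; this number is the rank of `v`. -/
lemma exists_rank_of_forall_isMaxChain_ncard_eq [Finite α]
    (hs : ∀ s t : Set α, IsMaxChain (· < ·) s → IsMaxChain (· < ·) t → s.ncard = t.ncard) :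
    ∃ rk : α → ℕ, (∀ a b, a ⋖ b → rk b = rk a + 1) ∧ ∀ v, ∃ u ≤ v, rk u = 0 := by
  have through (v : α) : ∃ C, IsMaxChain (· < ·) C ∧ {v} ⊆ C := IsChain.singleton.exists_maxChain
  choose C hC hvC using through
  simp only [Set.singleton_subset_iff] at hvC
  refine ⟨fun v => (C v ∩ Set.Iio v).ncard, fun a b hab => ?_, fun v => ?_⟩
  · obtain ⟨M, hM, habM⟩ := (IsChain.pair hab.lt).exists_maxChain
    obtain ⟨haM, hbM⟩ := Set.pair_subset_iff.1 habM
    beta_reduce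
    rw [ncard_inter_Iio_eq_of_isMaxChain hs (hC b) hM (hvC b) hbM,
      ncard_inter_Iio_eq_of_isMaxChain hs (hC a) hM (hvC a) haM,
      inter_Iio_eq_insert_of_covBy hM.1 haM hab,
      Set.ncard_insert_of_notMem fun h => lt_irrefl a h.2]
  · obtain ⟨u, huv, hu⟩ := exists_minimal_le_of_wellFoundedLT (fun _ => True) v trivial
    exact ⟨u, huv, by simp [(minimal_true.1 hu).Iio_eq]⟩

end StronglyGraded

/-- Avoidance of `3+1`: for a strict order `r` the condition says that no element is incomparable
to all three members of a chain `x < y < z`. -/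
def IsThreePlusOneFree {α : Type*} (r : α → α → Prop) : Prop :=
  ∀ ⦃x y z⦄, r x y → r y z → ∀ w, r x w ∨ r w z

section Ranked

variable {α : Type*} [PartialOrder α] {rk : α → ℕ} {x y z u v : α}

section LocallyFinite

variable [LocallyFiniteOrder α]

lemma strictMono_of_covBy_rank (hrk : ∀ a b : α, a ⋖ b → rk b = rk a + 1) : StrictMono rk :=
  (strictMono_iff_forall_covBy rk).2 fun a b hab => by simp [hrk a b hab]

lemma exists_lt_lt_rank_eq_add_two (hrk : ∀ a b : α, a ⋖ b → rk b = rk a + 1)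
    (hxy : x < y) (hyz : y < z) : ∃ y' z', x < y' ∧ y' < z' ∧ rk z' = rk x + 2 := by
  obtain ⟨y', hxy', hy'y⟩ := exists_covBy_le_of_lt hxy
  obtain ⟨z', hyz', -⟩ := exists_covBy_le_of_lt (hy'y.trans_lt hyz)
  exact ⟨y', z', hxy'.lt, hyz'.lt, by rw [hrk _ _ hyz', hrk _ _ hxy']⟩

lemma exists_lt_lt_rank_add_two_eq (hrk : ∀ a b : α, a ⋖ b → rk b = rk a + 1)
    (hxy : x < y) (hyz : y < z) : ∃ x' y', x' < y' ∧ y' < z ∧ rk x' + 2 = rk z := by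
  obtain ⟨y', hyy', hy'z⟩ := exists_le_covBy_of_lt hyz
  obtain ⟨x', -, hx'y'⟩ := exists_le_covBy_of_lt (hxy.trans_le hyy')
  exact ⟨x', y', hx'y'.lt, hy'z.lt, by rw [hrk _ _ hy'z, hrk _ _ hx'y']⟩

lemma covBy_of_rank_add_two_le_of_not_lt (h31 : IsThreePlusOneFree ((· < ·) : α → α → Prop))
    (hrk : ∀ a b : α, a ⋖ b → rk b = rk a + 1) (huv : rk u + 2 ≤ rk v) (hnot : ¬ u < v)
    (hux : u < x) : u ⋖ x := by
  refine ⟨hux, fun y huy hyx => ?_⟩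
  obtain ⟨y', z', huy', hyz', hz'⟩ := exists_lt_lt_rank_eq_add_two hrk huy hyx
  have := strictMono_of_covBy_rank hrk ((h31 huy' hyz' v).resolve_left hnot)
  omega

lemma covBy_of_rank_add_two_le_of_not_lt' (h31 : IsThreePlusOneFree ((· < ·) : α → α → Prop))
    (hrk : ∀ a b : α, a ⋖ b → rk b = rk a + 1) (huv : rk u + 2 ≤ rk v) (hnot : ¬ u < v)
    (hxv : x < v) : x ⋖ v := by
  refine ⟨hxv, fun y hxy hyv => ?_⟩
  obtain ⟨x', y', hxy', hyv', hx'⟩ := exists_lt_lt_rank_add_two_eq hrk hxy hyv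
  have := strictMono_of_covBy_rank hrk ((h31 hxy' hyv' u).resolve_right hnot)
  omega

lemma lt_of_rank_add_two_le (h31 : IsThreePlusOneFree ((· < ·) : α → α → Prop))
    (hrk : ∀ a b : α, a ⋖ b → rk b = rk a + 1) (hxy : x < y) (hyz : y < z)
    (huv : rk u + 2 ≤ rk v) : u < v := by
  by_contra hnot
  have mono := strictMono_of_covBy_rank hrk
  have above_u {w : α} (h : u < w) : rk w = rk u + 1 :=
    hrk _ _ (covBy_of_rank_add_two_le_of_not_lt h31 hrk huv hnot h)
  have below_v {w : α} (h : w < v) : rk v = rk w + 1 :=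
    hrk _ _ (covBy_of_rank_add_two_le_of_not_lt' h31 hrk huv hnot h)
  obtain ⟨y', z', hxy', hyz', hz'⟩ := exists_lt_lt_rank_eq_add_two hrk hxy hyz
  have hv : rk v ≤ rk x + 1 := by
    obtain h | h := h31 hxy' hyz' v
    · exact (below_v h).le
    · have := mono h
      omega
  obtain h | h := h31 hxy' hyz' u
  · have := mono h
    omega
  · have := above_u h
    omega

end LocallyFinite

section LevelDominators

variable [Fintype α]

open Classical in
/-- The elements lying above the whole level just below their own. -/
noncomputable def levelDominators (rk : α → ℕ) : Finset α :=
  {x | ∀ a, rk a + 1 = rk x → a < x}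

lemma mem_levelDominators : x ∈ levelDominators rk ↔ ∀ a, rk a + 1 = rk x → a < x := by
  simp [levelDominators]

lemma rank_pos_of_notMem_levelDominators (hx : x ∉ levelDominators rk) : 0 < rk x := by
  by_contra! h
  exact hx (mem_levelDominators.2 fun a ha => by omega)

lemma lt_of_notMem_levelDominators (h31 : IsThreePlusOneFree ((· < ·) : α → α → Prop))
    (hrk : ∀ a b : α, a ⋖ b → rk b = rk a + 1) (hfar : ∀ u v : α, rk u + 2 ≤ rk v → u < v)
    (hx : x ∉ levelDominators rk) (hxy : rk y = rk x + 1) : x < y := by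
  rw [mem_levelDominators] at hx
  push Not at hx
  obtain ⟨a, hax, hnot⟩ := hx
  have hay : ¬ a ⋖ y := fun h => by
    have := hrk _ _ h
    omega
  obtain ⟨c, hac, hcy⟩ := (not_covBy_iff (hfar a y (by omega))).1 hay
  exact (h31 hac hcy x).resolve_left hnot

end LevelDominators

lemma lt_card_of_forall_eq_succ {ι : Type*} [Fintype ι] {f : ι → ℕ}
    (h : ∀ a k, f a = k + 1 → ∃ b, f b = k) (a : ι) : f a < Fintype.card ι := by
  have attained (k : ℕ) (hk : k ≤ f a) : ∃ b, f b = k := by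
    induction hk using Nat.decreasingInduction with
    | of_succ k _ ih =>
      obtain ⟨b, hb⟩ := ih
      exact h b k hb
    | self => exact ⟨a, rfl⟩
  have range_subset : range (f a + 1) ⊆ univ.image f := fun k hk => by
    obtain ⟨b, rfl⟩ := attained k (mem_range_succ_iff.1 hk)
    exact mem_image_of_mem f (mem_univ b)
  simpa using (card_le_card range_subset).trans card_image_le

lemma rank_lt_card [Fintype α] (hrk : ∀ a b : α, a ⋖ b → rk b = rk a + 1)
    (hfar : ∀ u v : α, rk u + 2 ≤ rk v → u < v) (hzero : ∃ u, rk u = 0) (a : α) :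
    rk a < Fintype.card α := by
  refine lt_card_of_forall_eq_succ (fun v k hv => ?_) a
  obtain ⟨u, hu⟩ := hzero
  obtain rfl | hk := k.eq_zero_or_pos
  · exact ⟨u, hu⟩
  · obtain ⟨w, -, hwv⟩ := exists_le_covBy_of_lt (hfar u v (by omega))
    have := hrk w v hwv
    exact ⟨w, by omega⟩

end Ranked

section LayeredRel

variable {α : Type*} [DecidableEq α] {m : ℕ}

/-- The level of `x` encoded by a colouring `f` and a vertex set `S`: the elements of colour `k` are
split between level `k`, if they lie in `S`, and level `k + 1`. -/
def layerIndex (f : α → Fin m) (S : Finset α) (x : α) : ℕ :=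
  f x + if x ∈ S then 0 else 1

/-- The relation encoded by a colouring `f` and a cut graph `(S, E)`: elements at least two levels
apart are related, and of two elements on consecutive levels the only pairs left to be
specified by `E` are those of equal colour. -/
def layeredRel (f : α → Fin m) (p : Σ _ : Finset α, Finset (α × α)) (x y : α) : Prop :=
  layerIndex f p.1 x + 2 ≤ layerIndex f p.1 y ∨
    layerIndex f p.1 y = layerIndex f p.1 x + 1 ∧ (x ∉ p.1 ∨ y ∈ p.1 ∨ (x, y) ∈ p.2)

variable [Fintype α] [PartialOrder α] {rk : α → ℕ} {x y z : α}

lemma exists_layerIndex_levelDominators_eq (hm : ∀ x, rk x < m) :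
    ∃ f : α → Fin m, ∀ x, layerIndex f (levelDominators rk) x = rk x := by
  refine ⟨fun x => ⟨rk x - if x ∈ levelDominators rk then 0 else 1,
    (Nat.sub_le _ _).trans_lt (hm x)⟩, fun x => ?_⟩
  by_cases hx : x ∈ levelDominators rk
  · simp [layerIndex, hx]
  · have := rank_pos_of_notMem_levelDominators hx
    simp only [layerIndex, hx, if_false]
    omega

lemma exists_layeredRel_eq_lt (h31 : IsThreePlusOneFree ((· < ·) : α → α → Prop))
    (hrk : ∀ a b : α, a ⋖ b → rk b = rk a + 1) (hzero : ∃ u, rk u = 0)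
    (hm : Fintype.card α ≤ m) (hxy : x < y) (hyz : y < z) :
    ∃ f : α → Fin m, (∃ a b, f a ≠ f b) ∧
      ∃ p ∈ cutGraphs f, layeredRel f p = ((· < ·) : α → α → Prop) := by
  classical
  let : LocallyFiniteOrder α := Fintype.toLocallyFiniteOrder
  have mono := strictMono_of_covBy_rank hrk
  have hfar (u v : α) : rk u + 2 ≤ rk v → u < v := lt_of_rank_add_two_le h31 hrk hxy hyz
  obtain ⟨f, hf⟩ := exists_layerIndex_levelDominators_eq
    fun x => (rank_lt_card hrk hfar hzero x).trans_le hm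
  have hf' (x : α) : f x + (if x ∈ levelDominators rk then 0 else 1) = rk x := by
    rw [← hf x, layerIndex]
  refine ⟨f, ⟨x, z, fun hxz => ?_⟩, ⟨levelDominators rk, (monoCut (levelDominators rk) f).filter
    fun e => e.1 < e.2⟩, ?_, ?_⟩
  · have := mono hxy
    have := mono hyz
    grind
  · simp [cutGraphs]
  · ext a b
    simp only [layeredRel, hf]
    constructor
    · rintro (h | ⟨h, ha | hb | hE⟩)
      · exact hfar a b h
      · exact lt_of_notMem_levelDominators h31 hrk hfar ha h
      · exact mem_levelDominators.1 hb a h.symm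
      · exact (mem_filter.1 hE).2
    · intro hab
      have := mono hab
      have consecutive (h : rk b = rk a + 1) (ha : a ∈ levelDominators rk)
          (hb : b ∉ levelDominators rk) : f a = f b := by
        grind
      have mem_E : (a, b) ∈ (monoCut (levelDominators rk) f).filter (fun e => e.1 < e.2) ↔
          a ∈ levelDominators rk ∧ b ∉ levelDominators rk ∧ f a = f b := by
        simp [monoCut, hab, and_assoc]
      grind

end LayeredRel

section Bipartite

variable {α : Type*}

/-- Every vertex of the directed graph with edge set `E` is an endpoint of some edge. -/
def NoIsolated (E : Finset (α × α)) : Prop :=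
  ∀ v, ∃ w, (v, w) ∈ E ∨ (w, v) ∈ E

lemma ncard_eq_two_of_isMaxChain {r : α → α → Prop} {S C : Set α}
    (hS : ∀ x y, r x y → x ∈ S ∧ y ∉ S) (hr : ∀ v, ∃ w, r v w ∨ r w v) (hC : IsMaxChain r C)
    (hne : C.Nonempty) : C.ncard = 2 := by
  have exists_rel : ∃ a ∈ C, ∃ b ∈ C, r a b := by
    obtain ⟨v, hv⟩ := hne
    by_contra! hnot
    have eq_v (u : α) (hu : u ∈ C) : u = v := by
      by_contra huv
      exact (hC.1 hu hv huv).elim (hnot u hu v hv) (hnot v hv u hu)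
    obtain ⟨w, hw⟩ := hr v
    have hwC : w ∈ C := hC.2 (hC.1.insert fun u hu _ => eq_v u hu ▸ hw.symm)
      (Set.subset_insert w C) ▸ Set.mem_insert w C
    exact hw.elim (hnot v hv w hwC) (hnot w hwC v hv)
  obtain ⟨a, ha, b, hb, hab⟩ := exists_rel
  have eq_pair : C = {a, b} := by
    refine Set.Subset.antisymm (fun c hc => ?_) (Set.pair_subset ha hb)
    by_contra! hcab
    obtain ⟨hca, hcb⟩ : c ≠ a ∧ c ≠ b := by simpa using hcab
    have hcS : c ∉ S := (hC.1 hc ha hca).elim (fun h => absurd (hS a b hab).1 (hS c a h).2)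
      fun h => (hS a c h).2
    exact (hC.1 hc hb hcb).elim (fun h => hcS (hS c b h).1) fun h => (hS a b hab).2 (hS b c h).1
  rw [eq_pair, Set.ncard_pair]
  rintro rfl
  exact (hS a a hab).2 (hS a a hab).1

variable [Fintype α] [DecidableEq α]

lemma exists_cutGraphs_eq_of_forall_not_rel {r : α → α → Prop} (hr : ∀ x y z, r x y → ¬ r y z) :
    ∃ p ∈ cutGraphs fun _ : α => (), (fun x y => (x, y) ∈ p.2) = r := by
  classical
  refine ⟨⟨({x | ∃ y, r x y} : Finset α), ({e | r e.1 e.2} : Finset (α × α))⟩, ?_, by simp⟩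
  simp only [mem_cutGraphs, mem_filter_univ, not_exists, and_true]
  exact fun x y hxy => ⟨⟨y, hxy⟩, fun z => hr x y z hxy⟩

lemma injOn_edges_noIsolated :
    Set.InjOn (fun p : Σ _ : Finset α, Finset (α × α) => p.2)
      {p | p ∈ cutGraphs (fun _ : α => ()) ∧ NoIsolated p.2} := by
  have mem_side {S : Finset α} {E : Finset (α × α)} (h : ⟨S, E⟩ ∈ cutGraphs fun _ : α => ())
      (hE : NoIsolated E) (x : α) : x ∈ S ↔ ∃ y, (x, y) ∈ E := by
    rw [mem_cutGraphs] at h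
    refine ⟨fun hx => ?_, fun ⟨y, hy⟩ => (h x y hy).1⟩
    obtain ⟨y, hy | hy⟩ := hE x
    · exact ⟨y, hy⟩
    · exact absurd hx (h y x hy).2.1
  rintro ⟨S, E⟩ ⟨hS, hE⟩ ⟨T, F⟩ ⟨hT, hF⟩ (rfl : E = F)
  obtain rfl : S = T := ext fun x => (mem_side hS hE x).trans (mem_side hT hF x).symm
  rfl

open Classical in
lemma card_filter_not_noIsolated_le :
    #{p ∈ cutGraphs (fun _ : α => ()) | ¬ NoIsolated p.2} ≤ isolatedCutCount α := by
  refine (card_le_card fun p hp => ?_).trans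
    (card_biUnion_le (s := univ) (t := fun v : α => cutGraphs fun x => decide (x = v)))
  obtain ⟨hp, hiso⟩ := mem_filter.1 hp
  rw [NoIsolated] at hiso
  push Not at hiso
  obtain ⟨v, hv⟩ := hiso
  refine mem_biUnion.2 ⟨v, mem_univ v, mem_cutGraphs.2 fun x y hxy => ?_⟩
  have hxv : x ≠ v := by
    rintro rfl
    exact (hv y).1 hxy
  have hyv : y ≠ v := by
    rintro rfl
    exact (hv x).2 hxy
  obtain ⟨hx, hy, -⟩ := mem_cutGraphs.1 hp x y hxy
  exact ⟨hx, hy, by simp [hxv, hyv]⟩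

end Bipartite

section Counting

variable {n : ℕ} {r : Fin n → Fin n → Prop}

lemma IsStrictOrderRel.isStrictOrder (hr : IsStrictOrderRel r) : IsStrictOrder (Fin n) r where
  irrefl := hr.1
  trans := hr.2

lemma IsStrictOrderRel.isThreePlusOneFree (hr : IsStrictOrderRel r) (h31 : RelAvoids31 r) :
    IsThreePlusOneFree r := by
  intro x y z hxy hyz w
  by_contra! hw
  obtain ⟨hxw, hwz⟩ := hw
  exact h31 ⟨w, x, y, z, hxy, hyz, ⟨fun h => hwz (hr.2 _ _ _ h (hr.2 _ _ _ hxy hyz)), hxw⟩,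
    ⟨fun h => hwz (hr.2 _ _ _ h hyz), fun h => hxw (hr.2 _ _ _ hxy h)⟩,
    hwz, fun h => hxw (hr.2 _ _ _ hxy (hr.2 _ _ _ hyz h))⟩

lemma relMaxChain_iff_isMaxChain {s : Finset (Fin n)} :
    RelMaxChain r s ↔ IsMaxChain r (s : Set (Fin n)) := by
  refine and_congr Iff.rfl ⟨fun h t ht hst => ?_, fun h t ht hst => ?_⟩
  · lift t to Finset (Fin n) using t.toFinite
    exact congrArg _ (h t ht (coe_subset.1 hst))
  · exact coe_injective (h ht (coe_subset.2 hst))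

lemma relStronglyGraded_iff_forall_isMaxChain :
    RelStronglyGraded r ↔
      ∀ s t : Set (Fin n), IsMaxChain r s → IsMaxChain r t → s.ncard = t.ncard := by
  simp only [RelStronglyGraded, relMaxChain_iff_isMaxChain]
  refine ⟨fun h s t => ?_, fun h s t => ?_⟩
  · lift s to Finset (Fin n) using s.toFinite
    lift t to Finset (Fin n) using t.toFinite
    simpa only [Set.ncard_coe_finset] using h s t
  · simpa only [Set.ncard_coe_finset] using h s t

lemma RelStronglyGraded.relWeaklyGraded (hs : RelStronglyGraded r) (hr : IsStrictOrderRel r) :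
    RelWeaklyGraded r := by
  have := hr.isStrictOrder
  let := partialOrderOfSO r
  obtain ⟨rk, hcov, hzero⟩ := exists_rank_of_forall_isMaxChain_ncard_eq
    (relStronglyGraded_iff_forall_isMaxChain.1 hs)
  refine ⟨rk, fun a b hab h => hcov a b ⟨hab, fun c hac hcb => h ⟨c, hac, hcb⟩⟩, fun v => ?_⟩
  obtain ⟨u, huv, hu⟩ := hzero v
  refine ⟨u, ?_, hu⟩
  obtain rfl | hlt := huv.eq_or_lt
  · exact .refl
  · exact .single (.inr hlt)

lemma gCount_le_wCount (n : ℕ) : gCount n ≤ wCount n :=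
  Nat.card_le_card_of_injective
    (Subtype.map id fun _ ⟨hr, hs, h31⟩ => ⟨hr, hs.relWeaklyGraded hr, h31⟩)
    (Subtype.map_injective _ Function.injective_id)

lemma RelWeaklyGraded.exists_layeredRel_eq (hw : RelWeaklyGraded r) (hr : IsStrictOrderRel r)
    (h31 : RelAvoids31 r) {x y z : Fin n} (hxy : r x y) (hyz : r y z) :
    ∃ f : Fin n → Fin n, (∃ a b, f a ≠ f b) ∧ ∃ p ∈ cutGraphs f, layeredRel f p = r := by
  have := hr.isStrictOrder
  let := partialOrderOfSO r
  obtain ⟨rk, hcov, hzero⟩ := hw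
  obtain ⟨u, -, hu⟩ := hzero x
  exact exists_layeredRel_eq_lt (rk := rk) (hr.isThreePlusOneFree h31)
    (fun a b hab => hcov a b hab.1 fun ⟨c, hac, hcb⟩ => hab.2 hac hcb) ⟨u, hu⟩
    (Fintype.card_fin n).le hxy hyz

lemma wCount_le (n : ℕ) :
    wCount n ≤ #(cutGraphs fun _ : Fin n => ()) + nonconstCutCount (Fin n) (Fin n) := by
  classical
  let shallow := (cutGraphs fun _ : Fin n => ()).image fun p x y => (x, y) ∈ p.2
  let layered := (({f : Fin n → Fin n | ∃ x y, f x ≠ f y} : Finset _).sigma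
    (cutGraphs (α := Fin n) (L := Fin n))).image fun q => layeredRel q.1 q.2
  have subset : ({r | IsStrictOrderRel r ∧ RelWeaklyGraded r ∧ RelAvoids31 r} : Finset
      (Fin n → Fin n → Prop)) ⊆ shallow ∪ layered := by
    intro r hr
    obtain ⟨hr, hw, h31⟩ := (mem_filter.1 hr).2
    by_cases hchain : ∃ x y z, r x y ∧ r y z
    · obtain ⟨x, y, z, hxy, hyz⟩ := hchain
      obtain ⟨f, hf, p, hp, rfl⟩ := hw.exists_layeredRel_eq hr h31 hxy hyz
      exact mem_union_right _ (mem_image.2 ⟨⟨f, p⟩, by simp [hf, hp], rfl⟩)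
    · push Not at hchain
      exact mem_union_left _ (mem_image.2 (exists_cutGraphs_eq_of_forall_not_rel hchain))
  calc wCount n = #{r : Fin n → Fin n → Prop |
          IsStrictOrderRel r ∧ RelWeaklyGraded r ∧ RelAvoids31 r} := by
        rw [wCount, Nat.card_eq_fintype_card, Fintype.card_subtype]
    _ ≤ #shallow + #layered := (card_le_card subset).trans (card_union_le _ _)
    _ ≤ _ := by
        refine add_le_add card_image_le (card_image_le.trans_eq ?_)
        rw [card_sigma, nonconstCutCount]
        congr!

lemma isStrictOrderRel_of_mem_cutGraphs {p : Σ _ : Finset (Fin n), Finset (Fin n × Fin n)}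
    (hp : p ∈ cutGraphs fun _ : Fin n => ()) : IsStrictOrderRel fun x y => (x, y) ∈ p.2 := by
  rw [mem_cutGraphs] at hp
  exact ⟨fun a h => (hp a a h).2.1 (hp a a h).1, fun a b c hab hbc =>
    absurd (hp b c hbc).1 (hp a b hab).2.1⟩

lemma relAvoids31_of_mem_cutGraphs {p : Σ _ : Finset (Fin n), Finset (Fin n × Fin n)}
    (hp : p ∈ cutGraphs fun _ : Fin n => ()) : RelAvoids31 fun x y => (x, y) ∈ p.2 := by
  rw [mem_cutGraphs] at hp
  rintro ⟨w, x, y, z, hxy, hyz, -⟩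
  exact (hp x y hxy).2.1 (hp y z hyz).1

lemma relStronglyGraded_of_noIsolated {p : Σ _ : Finset (Fin n), Finset (Fin n × Fin n)}
    (hp : p ∈ cutGraphs fun _ : Fin n => ()) (hE : NoIsolated p.2) :
    RelStronglyGraded fun x y => (x, y) ∈ p.2 := by
  rw [mem_cutGraphs] at hp
  rw [relStronglyGraded_iff_forall_isMaxChain]
  intro s t hs ht
  cases isEmpty_or_nonempty (Fin n)
  · exact congrArg _ (Subsingleton.elim s t)
  · have ncard_eq_two {C : Set (Fin n)} (hC : IsMaxChain (fun x y => (x, y) ∈ p.2) C) :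
        C.ncard = 2 :=
      ncard_eq_two_of_isMaxChain (S := p.1) (fun x y hxy => ⟨(hp x y hxy).1, (hp x y hxy).2.1⟩)
        hE hC (hC.nonempty_iff.1 ‹_›)
    rw [ncard_eq_two hs, ncard_eq_two ht]

lemma card_cutGraphs_le_gCount_add (n : ℕ) :
    #(cutGraphs fun _ : Fin n => ()) ≤ gCount n + isolatedCutCount (Fin n) := by
  classical
  rw [← card_filter_add_card_filter_not fun p : Σ _ : Finset (Fin n), _ => NoIsolated p.2]
  refine add_le_add ?_ card_filter_not_noIsolated_le
  rw [gCount, Nat.card_eq_fintype_card, Fintype.card_subtype]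
  refine card_le_card_of_injOn (fun p x y => (x, y) ∈ p.2) (fun p hp => ?_) fun p hp q hq h => ?_
  · obtain ⟨hp, hE⟩ := mem_filter.1 hp
    exact mem_filter.2 ⟨mem_univ _, isStrictOrderRel_of_mem_cutGraphs hp,
      relStronglyGraded_of_noIsolated hp hE, relAvoids31_of_mem_cutGraphs hp⟩
  · exact injOn_edges_noIsolated (mem_filter.1 hp) (mem_filter.1 hq)
      (ext fun e => iff_of_eq (congrFun₂ h e.1 e.2))

end Counting

section Limits

variable (n : ℕ)

lemma one_sub_isolatedCutCount_div_le :
    1 - (isolatedCutCount (Fin n) : ℝ) / (n.factorial * psi n) ≤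
      (gCount n : ℝ) / (n.factorial * psi n) := by
  have h : (n.factorial * psi n : ℝ) ≤ gCount n + isolatedCutCount (Fin n) := by
    have := card_cutGraphs_const (α := Fin n) ()
    rw [Fintype.card_fin] at this
    exact this ▸ mod_cast card_cutGraphs_le_gCount_add n
  rwa [sub_le_iff_le_add, ← add_div, one_le_div (factorial_mul_psi_pos n)]

lemma wCount_div_le_one_add :
    (wCount n : ℝ) / (n.factorial * psi n) ≤
      1 + (nonconstCutCount (Fin n) (Fin n) : ℝ) / (n.factorial * psi n) := by
  have h : (wCount n : ℝ) ≤ n.factorial * psi n + nonconstCutCount (Fin n) (Fin n) := by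
    have := card_cutGraphs_const (α := Fin n) ()
    rw [Fintype.card_fin] at this
    exact this ▸ mod_cast wCount_le n
  have hpos := factorial_mul_psi_pos n
  rwa [one_add_div hpos.ne', div_le_div_iff_of_pos_right hpos]

end Limits

theorem graded_posets_asymptotics :
    Filter.Tendsto (fun n : ℕ => (gCount n : ℝ) / ((n.factorial : ℝ) * psi n))
      Filter.atTop (nhds 1) ∧
    Filter.Tendsto (fun n : ℕ => (wCount n : ℝ) / ((n.factorial : ℝ) * psi n))
      Filter.atTop (nhds 1) := by
  have lower : Tendsto (fun n => 1 - (isolatedCutCount (Fin n) : ℝ) / (n.factorial * psi n))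
      atTop (nhds 1) := by
    simpa using tendsto_isolatedCutCount_div.const_sub 1
  have upper : Tendsto (fun n => 1 + (nonconstCutCount (Fin n) (Fin n) : ℝ) /
      (n.factorial * psi n)) atTop (nhds 1) := by
    simpa using tendsto_nonconstCutCount_div.const_add 1
  have middle (n : ℕ) : (gCount n : ℝ) / (n.factorial * psi n) ≤
      (wCount n : ℝ) / (n.factorial * psi n) :=
    div_le_div_of_nonneg_right (mod_cast gCount_le_wCount n) (factorial_mul_psi_pos n).le
  exact ⟨tendsto_of_tendsto_of_tendsto_of_le_of_le lower upper one_sub_isolatedCutCount_div_le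
      fun n => (middle n).trans (wCount_div_le_one_add n),
    tendsto_of_tendsto_of_tendsto_of_le_of_le lower upper
      (fun n => (one_sub_isolatedCutCount_div_le n).trans (middle n)) wCount_div_le_one_add⟩
end

section
/- For every n ∈ ℕ, the number of strict partial order relations on {1, …, n} whose longest chain has exactly 2 elements (i.e., posets of height exactly 2) equals Σ_{m=1}^{n−1} C(n,m)·(2^{n−m} − 1)^m. -/
/-- the poset `(Fin n, r)` has height exactly `2`: its longest chain has two elements. -/
def RelHeightTwo {n : ℕ} (r : Fin n → Fin n → Prop) : Prop :=
  (∃ s : Finset (Fin n), RelChain r s ∧ s.card = 2) ∧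
  ∀ s : Finset (Fin n), RelChain r s → s.card ≤ 2

/-!
A strict order has height at most two exactly when no element lies both above and below others.
Such a relation is determined by its upper level `T`, the set of elements having a predecessor,
together with a nonempty set of predecessors in the complement of `T` for each element of `T`.
Hence a fixed `T` of size `m` accounts for `(2 ^ (n - m) - 1) ^ m` relations. The term `m = 0` is
the empty relation, which has height at most one, and for `n > 0` the term `m = n` vanishes.
-/

/-- A relation is two-level when no element lies both above and below something. These are the
strict orders of height at most two, with transitivity holding vacuously. -/
def IsTwoLevel {α : Type*} (r : α → α → Prop) : Prop :=
  ∀ ⦃a b c⦄, r a b → ¬ r b c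

/-- The set of elements with something below them; two-level relations are counted according to
this set, their upper level. -/
def upperLevel {α : Type*} (r : α → α → Prop) : Set α :=
  {b | ∃ a, r a b}

section Height

variable {n : ℕ} {r : Fin n → Fin n → Prop}

theorem relChain_pair {a b : Fin n} (hab : r a b) : RelChain r {a, b} := by
  simp only [RelChain, Finset.mem_insert, Finset.mem_singleton]
  rintro x (rfl | rfl) y (rfl | rfl) hxy <;> tauto

theorem IsStrictOrderRel.ne (hr : IsStrictOrderRel r) {a b : Fin n} (hab : r a b) : a ≠ b := by
  rintro rfl
  exact hr.1 a hab

theorem IsStrictOrderRel.relChain_triple (hr : IsStrictOrderRel r) {a b c : Fin n}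
    (hab : r a b) (hbc : r b c) : RelChain r {a, b, c} := by
  have hac : r a c := hr.2 a b c hab hbc
  simp only [RelChain, Finset.mem_insert, Finset.mem_singleton]
  rintro x (rfl | rfl | rfl) y (rfl | rfl | rfl) hxy <;> tauto

theorem IsTwoLevel.isStrictOrderRel (hr : IsTwoLevel r) : IsStrictOrderRel r :=
  ⟨fun _ haa => hr haa haa, fun _ _ _ hab hbc => absurd hbc (hr hab)⟩

theorem IsTwoLevel.card_le_two_of_relChain (hr : IsTwoLevel r) {s : Finset (Fin n)}
    (hs : RelChain r s) : s.card ≤ 2 := by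
  by_contra! hcard
  obtain ⟨a, ha, b, hb, c, hc, hab, hac, hbc⟩ := Finset.two_lt_card.1 hcard
  -- Any orientation of a triangle contains a directed path of length two.
  rcases hs a ha b hb hab with h₁ | h₁ <;> rcases hs b hb c hc hbc with h₂ | h₂ <;>
    rcases hs a ha c hc hac with h₃ | h₃ <;>
    first
      | exact hr h₁ h₂ | exact hr h₂ h₁ | exact hr h₁ h₃
      | exact hr h₃ h₁ | exact hr h₂ h₃ | exact hr h₃ h₂

theorem isTwoLevel_iff_relChain_card_le_two :
    IsTwoLevel r ↔ IsStrictOrderRel r ∧ ∀ s : Finset (Fin n), RelChain r s → s.card ≤ 2 := by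
  refine ⟨fun hr => ⟨hr.isStrictOrderRel, fun _ => hr.card_le_two_of_relChain⟩, ?_⟩
  rintro ⟨hr, hchain⟩ a b c hab hbc
  have hcard : ({a, b, c} : Finset (Fin n)).card = 3 :=
    Finset.card_eq_three.2 ⟨a, b, c, hr.ne hab, hr.ne (hr.2 a b c hab hbc), hr.ne hbc, rfl⟩
  have hle := hchain _ (hr.relChain_triple hab hbc)
  omega

theorem IsStrictOrderRel.exists_relChain_card_eq_two_iff (hr : IsStrictOrderRel r) :
    (∃ s : Finset (Fin n), RelChain r s ∧ s.card = 2) ↔ r ≠ ⊥ := by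
  constructor
  · rintro ⟨s, hs, hcard⟩ rfl
    obtain ⟨a, b, hab, rfl⟩ := Finset.card_eq_two.1 hcard
    exact (hs a (by simp) b (by simp) hab).elim id id
  · intro hne
    obtain ⟨a, b, hab⟩ : ∃ a b, r a b := by
      by_contra! hempty
      exact hne (funext₂ fun a b => eq_false (hempty a b))
    exact ⟨{a, b}, relChain_pair hab, Finset.card_pair (hr.ne hab)⟩

theorem isStrictOrderRel_and_relHeightTwo_iff :
    IsStrictOrderRel r ∧ RelHeightTwo r ↔ IsTwoLevel r ∧ r ≠ ⊥ := by
  rw [isTwoLevel_iff_relChain_card_le_two, RelHeightTwo, and_assoc]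
  refine and_congr_right fun hr => ?_
  rw [hr.exists_relChain_card_eq_two_iff, and_comm]

end Height

section Counting

variable {α : Type*}

theorem isTwoLevel_bot : IsTwoLevel (⊥ : α → α → Prop) :=
  fun _ _ _ hab => hab.elim

/-- A two-level relation with upper level `T` amounts to a choice, for each element of `T`, of its
nonempty set of predecessors outside `T`. -/
def twoLevelEquivPredecessors (T : Set α) :
    {r : α → α → Prop // IsTwoLevel r ∧ upperLevel r = T} ≃ (T → ↥(𝒫 Tᶜ \ {∅})) where
  toFun r b := ⟨{a | r.1 a b}, by
    obtain ⟨r, hr, rfl⟩ := r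
    exact ⟨fun _ hab ⟨_, hca⟩ => hr hca hab, Set.Nonempty.ne_empty b.2⟩⟩
  invFun f := ⟨fun a b => ∃ hb : b ∈ T, a ∈ (f ⟨b, hb⟩).1, by
    refine ⟨fun a b c ⟨hb, _⟩ ⟨hc, hbc⟩ => (f ⟨c, hc⟩).2.1 hbc hb, Set.ext fun b => ?_⟩
    refine ⟨fun ⟨_, hb, _⟩ => hb, fun hb => ?_⟩
    obtain ⟨a, hab⟩ := Set.nonempty_iff_ne_empty.2 (f ⟨b, hb⟩).2.2
    exact ⟨a, hb, hab⟩⟩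
  left_inv := by
    rintro ⟨r, hr, rfl⟩
    ext a b
    exact ⟨fun ⟨_, hab⟩ => hab, fun hab => ⟨⟨a, hab⟩, hab⟩⟩
  right_inv f := by
    ext b a
    exact ⟨fun ⟨_, hab⟩ => hab, fun hab => ⟨b.2, hab⟩⟩

theorem sum_set_apply_ncard [Fintype α] {M : Type*} [AddCommMonoid M] (f : ℕ → M) :
    ∑ T : Set α, f T.ncard =
      ∑ m ∈ Finset.range (Fintype.card α + 1), (Fintype.card α).choose m • f m := by
  calc ∑ T : Set α, f T.ncard
      = ∑ T : Finset α, f T.card := by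
        rw [← Fintype.finsetEquivSet.sum_comp]
        simp only [Fintype.finsetEquivSet_apply, Set.ncard_coe_finset]
    _ = ∑ m ∈ Finset.range (Fintype.card α + 1), (Fintype.card α).choose m • f m := by
        rw [← Finset.powerset_univ, Finset.sum_powerset_apply_card, Finset.card_univ]

variable [Finite α]

theorem card_isTwoLevel_upperLevel_eq (T : Set α) :
    Nat.card {r : α → α → Prop // IsTwoLevel r ∧ upperLevel r = T} =
      (2 ^ (Nat.card α - T.ncard) - 1) ^ T.ncard := by
  have hpred : (𝒫 Tᶜ \ {∅}).ncard = 2 ^ (Nat.card α - T.ncard) - 1 := by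
    rw [Set.ncard_sdiff_singleton_of_mem (Set.empty_subset _), Set.ncard_powerset, Set.ncard_compl]
  rw [Nat.card_congr (twoLevelEquivPredecessors T), Nat.card_fun, Nat.card_coe_set_eq,
    Nat.card_coe_set_eq, hpred]

theorem ncard_isTwoLevel :
    {r : α → α → Prop | IsTwoLevel r}.ncard =
      ∑ m ∈ Finset.range (Nat.card α + 1),
        (Nat.card α).choose m * (2 ^ (Nat.card α - m) - 1) ^ m := by
  have := Fintype.ofFinite α
  let fibers (T : Set α) :=
    Equiv.subtypeSubtypeEquivSubtypeInter IsTwoLevel fun r : α → α → Prop => upperLevel r = T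
  calc {r : α → α → Prop | IsTwoLevel r}.ncard
      = ∑ T : Set α, Nat.card {r : α → α → Prop // IsTwoLevel r ∧ upperLevel r = T} := by
        rw [← Nat.card_sigma, ← Nat.card_coe_set_eq]
        exact Nat.card_congr <|
          (Equiv.sigmaFiberEquiv fun r : {r : α → α → Prop // IsTwoLevel r} =>
            upperLevel r.1).symm.trans (Equiv.sigmaCongrRight fibers)
    _ = ∑ T : Set α, (2 ^ (Nat.card α - T.ncard) - 1) ^ T.ncard := by
        simp only [card_isTwoLevel_upperLevel_eq]
    _ = ∑ m ∈ Finset.range (Nat.card α + 1),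
          (Nat.card α).choose m * (2 ^ (Nat.card α - m) - 1) ^ m := by
        simp only [Nat.card_eq_fintype_card]
        exact sum_set_apply_ncard fun m => (2 ^ (Fintype.card α - m) - 1) ^ m

end Counting

theorem sum_range_choose_mul_two_pow_sub_one_pow (n : ℕ) :
    ∑ m ∈ Finset.range (n + 1), n.choose m * (2 ^ (n - m) - 1) ^ m =
      ∑ m ∈ Finset.Ico 1 n, n.choose m * (2 ^ (n - m) - 1) ^ m + 1 := by
  rcases n.eq_zero_or_pos with rfl | hn
  · simp
  · rw [Finset.sum_range_succ, Finset.range_eq_Ico, Finset.sum_eq_sum_Ico_succ_bot hn]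
    simp [hn.ne', add_comm]

theorem count_height_two_posets (n : ℕ) :
    Nat.card {r : Fin n → Fin n → Prop // IsStrictOrderRel r ∧ RelHeightTwo r} =
      ∑ m ∈ Finset.Ico 1 n, n.choose m * (2 ^ (n - m) - 1) ^ m := by
  have hset : {r : Fin n → Fin n → Prop | IsStrictOrderRel r ∧ RelHeightTwo r} =
      {r | IsTwoLevel r} \ {⊥} :=
    Set.ext fun _ => isStrictOrderRel_and_relHeightTwo_iff
  have hcount : {r : Fin n → Fin n → Prop | IsTwoLevel r}.ncard =
      ∑ m ∈ Finset.Ico 1 n, n.choose m * (2 ^ (n - m) - 1) ^ m + 1 := by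
    rw [ncard_isTwoLevel, Nat.card_fin, sum_range_choose_mul_two_pow_sub_one_pow]
  calc Nat.card {r : Fin n → Fin n → Prop // IsStrictOrderRel r ∧ RelHeightTwo r}
      = ({r : Fin n → Fin n → Prop | IsTwoLevel r} \ {⊥}).ncard := by
        rw [← hset]
        exact Nat.card_coe_set_eq _
    _ = ∑ m ∈ Finset.Ico 1 n, n.choose m * (2 ^ (n - m) - 1) ^ m := by
        rw [Set.ncard_sdiff_singleton_of_mem isTwoLevel_bot, hcount, Nat.add_sub_cancel]
end
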